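/- Let k be an algebraically closed field of characteristic 0, let n ≥ 2 and d ≥ 2. Consider the action of GL_{N+1}(k) × kˣ on homogeneous polynomials of degree d in k[x₀,…,x_N] given by (g, c)·F = c·(F ∘ g). Then the map sending a smooth homogeneous polynomial F of degree d in the n+2 variables x₀,…,x_{n+1} to the smooth homogeneous polynomial x_{n+2}^d − F in the n+3 variables x₀,…,x_{n+2} descends to a well-defined and injective map from the set of orbits of smooth degree-d forms in k[x₀,…,x_{n+1}] under GL_{n+2}(k) × kˣ to the set of orbits of smooth degree-d forms in k[x₀,…,x_{n+2}] under GL_{n+3}(k) × kˣ. -/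

import Mathlib

open MvPolynomial

/-- `substMatrix g F` is the polynomial `F(g·x)`, obtained from `F` by the linear
substitution `xᵢ ↦ ∑ⱼ gᵢⱼ xⱼ`. -/
noncomputable def substMatrix {k : Type*} [CommRing k] {N : ℕ}
    (g : Matrix (Fin N) (Fin N) k) (F : MvPolynomial (Fin N) k) : MvPolynomial (Fin N) k :=
  MvPolynomial.aeval (fun i => ∑ j, MvPolynomial.C (g i j) * MvPolynomial.X j) F

/-- Two polynomials `F, F'` in `N` variables lie in the same orbit of the action
`(g, c) · F = c • (F ∘ g)` of `GL_N(k) × kˣ` iff `F(g·x) = c • F'` for some `g, c`. -/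
def ProjectivelyEquivalent {k : Type*} [CommRing k] {N : ℕ}
    (F F' : MvPolynomial (Fin N) k) : Prop :=
  ∃ g : GL (Fin N) k, ∃ c : kˣ,
    substMatrix (g : Matrix (Fin N) (Fin N) k) F = (c : k) • F'

/-- A polynomial is smooth if the only common zero of its partial derivatives is the origin. -/
def SmoothPoly {k : Type*} [CommRing k] {N : ℕ} (F : MvPolynomial (Fin N) k) : Prop :=
  ∀ x : Fin N → k, (∀ i, MvPolynomial.eval x (MvPolynomial.pderiv i F) = 0) → x = 0

/-- The smooth degree-`d` forms in `N` variables. -/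
def SmoothForm (k : Type*) [CommRing k] (N d : ℕ) : Type _ :=
  {F : MvPolynomial (Fin N) k // F.IsHomogeneous d ∧ SmoothPoly F}

/-- The orbit relation on smooth degree-`d` forms induced by the `GL_N(k) × kˣ` action. -/
def orbitRel (k : Type*) [CommRing k] (N d : ℕ) :
    SmoothForm k N d → SmoothForm k N d → Prop :=
  fun F G => ProjectivelyEquivalent F.1 G.1

/-- The cyclic cover equation `x_{N+1}^d − F` of a form `F` in `x₀, …, x_N`. -/
noncomputable def cyclicCover {k : Type*} [CommRing k] {N : ℕ} (d : ℕ)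
    (F : MvPolynomial (Fin (N + 1)) k) : MvPolynomial (Fin (N + 2)) k :=
  MvPolynomial.X (Fin.last (N + 1)) ^ d - MvPolynomial.rename Fin.castSucc F

/-!
Write `H = t ^ d - F`. Then `H` is the sum of the `d`-th power of the linear form `t` and a function
invariant along the `t`-axis. An equivalence `H ∘ φ = c • H'` with `H' = t ^ d - F'` gives `H ∘ φ`
two such decompositions, with linear forms `l`, `m` and directions `v`, `w`; here `m` is `t` scaled
by a `d`-th root of `c`. The mixed derivative along `v` and `w` yields
`l w * l ^ (d - 2) = m v * m ^ (d - 2)`. Hence either `l` and `m` are proportional, or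
`l w = m v ≠ 1` (after changing the sign of `m` if `d = 2`) and the reflection interchanging `v` and
`w` maps `ker m` to `ker l` without changing the values of `H ∘ φ`. In both cases `φ` can be
corrected to map the hyperplane `t = 0` to itself, where `H` and `H'` restrict to `-F` and `-F'`.
-/

section Smooth

lemma pderiv_rename_of_notMem_range {R σ τ : Type*} [CommSemiring R] {f : σ → τ} {j : τ}
    (hj : j ∉ Set.range f) (p : MvPolynomial σ R) : pderiv j (rename f p) = 0 := by
  classical
  refine pderiv_eq_zero_of_notMem_vars fun hmem => hj ?_
  obtain ⟨i, -, hi⟩ := Finset.mem_image.1 (vars_rename f p hmem)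
  exact ⟨i, hi⟩

variable {k : Type*} [CommRing k] {N d : ℕ} {F : MvPolynomial (Fin (N + 1)) k}

lemma isHomogeneous_cyclicCover (hF : F.IsHomogeneous d) : (cyclicCover d F).IsHomogeneous d :=
  (isHomogeneous_X_pow _ _).sub hF.rename_isHomogeneous

lemma pderiv_castSucc_cyclicCover (i : Fin (N + 1)) :
    pderiv i.castSucc (cyclicCover d F) = -rename Fin.castSucc (pderiv i F) := by
  rw [cyclicCover, map_sub, pderiv_rename (Fin.castSucc_injective _), pderiv_pow,
    pderiv_X_of_ne i.castSucc_lt_last.ne', mul_zero, zero_sub]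

lemma pderiv_last_cyclicCover :
    pderiv (Fin.last (N + 1)) (cyclicCover d F) =
      (d : MvPolynomial (Fin (N + 2)) k) * X (Fin.last (N + 1)) ^ (d - 1) := by
  have hlast : Fin.last (N + 1) ∉ Set.range Fin.castSucc := by
    rintro ⟨i, hi⟩
    exact i.castSucc_lt_last.ne hi
  rw [cyclicCover, map_sub, pderiv_rename_of_notMem_range hlast, pderiv_pow, pderiv_X_self,
    mul_one, sub_zero]

lemma smoothPoly_cyclicCover [NoZeroDivisors k] (hd : (d : k) ≠ 0) (hF : SmoothPoly F) :
    SmoothPoly (cyclicCover d F) := by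
  intro z hz
  have hinit : z ∘ Fin.castSucc = 0 := hF _ fun i => by
    simpa only [pderiv_castSucc_cyclicCover, map_neg, eval_rename, neg_eq_zero]
      using hz i.castSucc
  have hlast : z (Fin.last (N + 1)) = 0 := by
    have hpow : (d : k) * z (Fin.last (N + 1)) ^ (d - 1) = 0 := by
      simpa only [pderiv_last_cyclicCover, map_mul, map_natCast, map_pow, eval_X]
        using hz (Fin.last (N + 1))
    exact eq_zero_of_pow_eq_zero ((mul_eq_zero.1 hpow).resolve_left hd)
  exact funext (Fin.lastCases hlast (congrFun hinit))

end Smooth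

section LinearlyEquivalent

variable {k U V W : Type*} [CommRing k] [AddCommGroup U] [Module k U]
  [AddCommGroup V] [Module k V] [AddCommGroup W] [Module k W]

/-- Two functions on `k`-modules are linearly equivalent if they agree up to a linear isomorphism
of their domains and a unit factor. This is `ProjectivelyEquivalent` without coordinates; the
domains may differ so that `k^(N+1)` can be replaced by `k × k^N`. -/
def LinearlyEquivalent (f : V → k) (g : W → k) : Prop :=
  ∃ φ : W ≃ₗ[k] V, ∃ c : kˣ, ∀ w, f (φ w) = c * g w

namespace LinearlyEquivalent

lemma refl (f : V → k) : LinearlyEquivalent f f :=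
  ⟨LinearEquiv.refl k V, 1, by simp⟩

lemma symm {f : V → k} {g : W → k} (h : LinearlyEquivalent f g) : LinearlyEquivalent g f := by
  obtain ⟨φ, c, hφ⟩ := h
  refine ⟨φ.symm, c⁻¹, fun v => ?_⟩
  rw [Units.eq_inv_mul_iff_mul_eq, ← hφ, φ.apply_symm_apply]

lemma trans {f : U → k} {g : V → k} {h : W → k} (hfg : LinearlyEquivalent f g)
    (hgh : LinearlyEquivalent g h) : LinearlyEquivalent f h := by
  obtain ⟨φ, c, hφ⟩ := hfg
  obtain ⟨ψ, e, hψ⟩ := hgh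
  refine ⟨ψ.trans φ, c * e, fun w => ?_⟩
  rw [LinearEquiv.trans_apply, hφ, hψ, Units.val_mul, mul_assoc]

end LinearlyEquivalent

lemma eval_substMatrix {N : ℕ} (g : Matrix (Fin N) (Fin N) k) (F : MvPolynomial (Fin N) k)
    (x : Fin N → k) : eval x (substMatrix g F) = eval (g.mulVec x) F := by
  rw [substMatrix, ← coe_aeval_eq_eval, ← coe_aeval_eq_eval, RingHom.coe_coe, RingHom.coe_coe,
    comp_aeval_apply]
  congr 2
  ext i
  simp [Matrix.mulVec, dotProduct]

lemma projectivelyEquivalent_iff_linearlyEquivalent [IsDomain k] [Infinite k] {N : ℕ}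
    {F F' : MvPolynomial (Fin N) k} :
    ProjectivelyEquivalent F F' ↔
      LinearlyEquivalent (fun x => eval x F) (fun x => eval x F') := by
  let glEquiv : GL (Fin N) k ≃* ((Fin N → k) ≃ₗ[k] (Fin N → k)) :=
    Matrix.GeneralLinearGroup.toLin.trans (LinearMap.GeneralLinearGroup.generalLinearEquiv k _)
  refine glEquiv.toEquiv.exists_congr fun g => exists_congr fun c => ?_
  rw [MvPolynomial.funext_iff]
  simp only [eval_substMatrix, smul_eval]
  rfl

lemma orbitRel_equivalence [IsDomain k] [Infinite k] (N d : ℕ) :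
    Equivalence (orbitRel k N d) where
  refl _ := projectivelyEquivalent_iff_linearlyEquivalent.2 (.refl _)
  symm h := projectivelyEquivalent_iff_linearlyEquivalent.2
    (projectivelyEquivalent_iff_linearlyEquivalent.1 h).symm
  trans h h' := projectivelyEquivalent_iff_linearlyEquivalent.2
    ((projectivelyEquivalent_iff_linearlyEquivalent.1 h).trans
      (projectivelyEquivalent_iff_linearlyEquivalent.1 h'))

lemma exists_injective_quot_orbitRel_map [IsDomain k] [Infinite k] {N M d : ℕ}
    (T : MvPolynomial (Fin N) k → MvPolynomial (Fin M) k)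
    (hsmooth : ∀ F, F.IsHomogeneous d → SmoothPoly F → (T F).IsHomogeneous d ∧ SmoothPoly (T F))
    (hequiv : ∀ F F', ProjectivelyEquivalent (T F) (T F') ↔ ProjectivelyEquivalent F F') :
    ∃ Φ : Quot (orbitRel k N d) → Quot (orbitRel k M d), Function.Injective Φ ∧
      ∀ (F : SmoothForm k N d) (G : SmoothForm k M d),
        G.1 = T F.1 → Φ (Quot.mk _ F) = Quot.mk _ G := by
  let onForms (F : SmoothForm k N d) : SmoothForm k M d := ⟨T F.1, hsmooth F.1 F.2.1 F.2.2⟩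
  refine ⟨Quot.map onForms fun F F' => (hequiv F.1 F'.1).2, ?_, fun F G hG => ?_⟩
  · rintro ⟨F⟩ ⟨F'⟩ hFF'
    have hTFF' : orbitRel k M d (onForms F) (onForms F') :=
      (orbitRel_equivalence M d).eqvGen_iff.1 (Quot.eqvGen_exact hFF')
    exact Quot.sound ((hequiv F.1 F'.1).1 hTFF')
  · exact congrArg (Quot.mk _) (Subtype.ext hG.symm)

end LinearlyEquivalent

section PowerSummand

lemma cast_ne_zero_of_cast_mul_pred_ne_zero {R : Type*} [Semiring R] {d : ℕ}
    (hd : ((d * (d - 1) : ℕ) : R) ≠ 0) : (d : R) ≠ 0 := by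
  rw [Nat.cast_mul] at hd
  exact left_ne_zero_of_mul hd

lemma sum_mul_pow_pred_eq_zero {R ι : Type*} [CommRing R] [IsDomain R] [Infinite R] [Fintype ι]
    {n : ℕ} (hn : (n : R) ≠ 0) {c a b : ι → R} {r : R}
    (h : ∀ s, ∑ i, c i * (a i + b i * s) ^ n = r) :
    ∑ i, c i * b i * a i ^ (n - 1) = 0 := by
  have hconst : ∑ i, Polynomial.C (c i) *
      (Polynomial.C (a i) + Polynomial.C (b i) * Polynomial.X) ^ n = Polynomial.C r :=
    Polynomial.funext fun s => by simpa [Polynomial.eval_finsetSum] using h s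
  have hderiv := congrArg (Polynomial.eval 0 ∘ Polynomial.derivative) hconst
  simp only [Function.comp_apply, Polynomial.derivative_sum, Polynomial.derivative_C_mul,
    Polynomial.derivative_pow, Polynomial.derivative_add, Polynomial.derivative_C,
    Polynomial.derivative_X, Polynomial.eval_finsetSum, Polynomial.eval_mul, Polynomial.eval_C,
    Polynomial.eval_pow, Polynomial.eval_add, Polynomial.eval_X, Polynomial.eval_zero,
    mul_zero, add_zero, zero_add, mul_one] at hderiv
  refine (mul_eq_zero.1 ?_).resolve_left hn
  rw [Finset.mul_sum, ← hderiv]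
  exact Finset.sum_congr rfl fun i _ => by ring

section CommRing

variable {k V W : Type*} [CommRing k] [AddCommGroup V] [Module k V] [AddCommGroup W] [Module k W]
  {d : ℕ}

/-- `H` is the sum of the `d`-th power of the linear form `l` and a function invariant under
translations along `v`, where `l v = 1`. -/
structure IsPowerSummand (d : ℕ) (H : V → k) (l : V →ₗ[k] k) (v : V) : Prop where
  apply_eq_one : l v = 1
  apply_add_smul : ∀ z s, H (z + s • v) = H z + (l z + s) ^ d - l z ^ d

namespace IsPowerSummand

variable {H : V → k} {l m : V →ₗ[k] k} {v w : V}

lemma comp_linearEquiv (h : IsPowerSummand d H l v) (φ : W ≃ₗ[k] V) :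
    IsPowerSummand d (H ∘ φ) (l ∘ₗ φ) (φ.symm v) where
  apply_eq_one := by simpa using h.apply_eq_one
  apply_add_smul z s := by simpa using h.apply_add_smul (φ z) s

lemma units_smul (h : IsPowerSummand d H l v) (e : kˣ) :
    IsPowerSummand d (fun z => e ^ d * H z) (e • l) (e⁻¹ • v) where
  apply_eq_one := by simp [h.apply_eq_one, Units.smul_def]
  apply_add_smul z s := by
    have hscale : (e * l z + s : k) = e * (l z + s * e⁻¹) := by
      rw [mul_add, mul_left_comm, Units.mul_inv, mul_one]
    rw [Units.smul_def, smul_smul, h.apply_add_smul, LinearMap.smul_apply, Units.smul_def,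
      smul_eq_mul, hscale, mul_pow, mul_pow]
    ring

lemma neg_of_even (h : IsPowerSummand d H l v) (hd : Even d) : IsPowerSummand d H (-l) (-v) := by
  have hneg : (-1 : kˣ) • l = -l := LinearMap.ext fun z => by simp [Units.smul_def]
  simpa [hd.neg_one_pow, hneg] using h.units_smul (-1)

/-- Compare the two ways of computing `H (z + s • v + t • w)`, and take the coefficient of `s t`. -/
lemma mul_pow_eq_mul_pow [IsDomain k] [Infinite k] (hd : ((d * (d - 1) : ℕ) : k) ≠ 0)
    (hv : IsPowerSummand d H l v) (hw : IsPowerSummand d H m w) (z : V) :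
    l w * l z ^ (d - 2) = m v * m z ^ (d - 2) := by
  obtain ⟨hd₀, hd₁⟩ : (d : k) ≠ 0 ∧ ((d - 1 : ℕ) : k) ≠ 0 := by
    rwa [Nat.cast_mul, mul_ne_zero_iff] at hd
  have hcross (s t : k) : (l z + l w * t + s) ^ d - (m z + t + m v * s) ^ d
      + (m z + m v * s) ^ d - (l z + s) ^ d
      = (l z + l w * t) ^ d - (m z + t) ^ d + m z ^ d - l z ^ d := by
    have hvw := hw.apply_add_smul (z + s • v) t
    rw [add_right_comm, hv.apply_add_smul, hw.apply_add_smul, hv.apply_add_smul] at hvw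
    simp only [map_add, map_smul, smul_eq_mul] at hvw
    linear_combination hvw
  have hslope (t : k) : (l z + l w * t) ^ (d - 1) - m v * (m z + t) ^ (d - 1) =
      l z ^ (d - 1) - m v * m z ^ (d - 1) := by
    have hds := sum_mul_pow_pred_eq_zero hd₀ (c := ![1, -1, 1, -1])
      (a := ![l z + l w * t, m z + t, m z, l z]) (b := ![1, m v, m v, 1])
      (r := (l z + l w * t) ^ d - (m z + t) ^ d + m z ^ d - l z ^ d)
      fun s => by
        simp only [Fin.sum_univ_four, Matrix.cons_val]
        linear_combination hcross s t
    simp only [Fin.sum_univ_four, Matrix.cons_val] at hds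
    linear_combination hds
  have hdt := sum_mul_pow_pred_eq_zero hd₁ (c := ![1, -m v]) (a := ![l z, m z]) (b := ![l w, 1])
    (r := l z ^ (d - 1) - m v * m z ^ (d - 1)) fun t => by
      simp only [Fin.sum_univ_two, Matrix.cons_val]
      linear_combination hslope t
  simp only [Fin.sum_univ_two, Matrix.cons_val, Nat.sub_sub] at hdt
  linear_combination hdt

end IsPowerSummand

end CommRing

namespace IsPowerSummand

variable {k V : Type*} [Field k] [AddCommGroup V] [Module k V] {d : ℕ} {H : V → k}
  {l m : V →ₗ[k] k} {v w : V}

/-- The isomorphism is the reflection interchanging `v` and `w`. On `ker m` it has the form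
`z ↦ z + r • w - r • v`, where translating by `r • w` adds `r ^ d` to `H` and translating back by
`r • v` removes it. -/
lemma exists_linearEquiv_of_ne_one (hv : IsPowerSummand d H l v) (hw : IsPowerSummand d H m w)
    (hlm : l w = m v) (hne : l w ≠ 1) :
    ∃ σ : V ≃ₗ[k] V, ∀ z, m z = 0 → l (σ z) = 0 ∧ H (σ z) = H z := by
  have hne' : 1 - l w ≠ 0 := sub_ne_zero.2 hne.symm
  let f : V →ₗ[k] k := (1 - l w)⁻¹ • (l - m)
  have hf : f (v - w) = 2 := by
    simp only [f, LinearMap.smul_apply, LinearMap.sub_apply, map_sub, hv.apply_eq_one,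
      hw.apply_eq_one, ← hlm, smul_eq_mul]
    field_simp
    ring
  let σ : V ≃ₗ[k] V := Module.reflection hf
  refine ⟨σ, fun z hz => ?_⟩
  have hσ : σ z + f z • v = z + f z • w := by
    rw [Module.reflection_apply, smul_sub]
    abel
  have hlσ : l (σ z) = 0 := by
    have hfz : f z * (1 - l w) = l z := by
      simp only [f, LinearMap.smul_apply, LinearMap.sub_apply, hz, sub_zero, smul_eq_mul]
      field_simp
    have hl := congrArg l hσ
    simp only [map_add, map_smul, smul_eq_mul, hv.apply_eq_one] at hl
    linear_combination hl - hfz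
  have hH := congrArg H hσ
  rw [hv.apply_add_smul, hw.apply_add_smul, hlσ, hz] at hH
  exact ⟨hlσ, by linear_combination hH⟩

lemma exists_linearEquiv [Infinite k] (hd : ((d * (d - 1) : ℕ) : k) ≠ 0)
    (hv : IsPowerSummand d H l v) (hw : IsPowerSummand d H m w) :
    ∃ σ : V ≃ₗ[k] V, ∀ z, m z = 0 → l (σ z) = 0 ∧ H (σ z) = H z := by
  have hpow := mul_pow_eq_mul_pow hd hv hw
  obtain rfl | hd₂ : d = 2 ∨ d - 2 ≠ 0 := by
    have : d * (d - 1) ≠ 0 := fun h => hd (by rw [h, Nat.cast_zero])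
    grind
  · have hlm : l w = m v := by simpa using hpow 0
    by_cases hone : l w = 1
    · have htwo : (2 : k) ≠ 0 := by simpa using hd
      have hw' := hw.neg_of_even even_two
      obtain ⟨σ, hσ⟩ := exists_linearEquiv_of_ne_one hv hw' (by simp [hlm]) (by
        rw [map_neg, hone]
        exact fun h => htwo (by linear_combination -h))
      exact ⟨σ, fun z hz => hσ z (by simp [hz])⟩
    · exact exists_linearEquiv_of_ne_one hv hw hlm hone
  · by_cases hlw : l w = 0
    · have hmv : m v = 0 := by simpa [hlw, hw.apply_eq_one] using (hpow w).symm
      exact exists_linearEquiv_of_ne_one hv hw (hlw.trans hmv.symm) (by simp [hlw])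
    · refine ⟨LinearEquiv.refl k V, fun z hz => ⟨?_, rfl⟩⟩
      have hz' : l w * l z ^ (d - 2) = 0 := by rw [hpow, hz, zero_pow hd₂, mul_zero]
      exact eq_zero_of_pow_eq_zero ((mul_eq_zero.1 hz').resolve_left hlw)

end IsPowerSummand

end PowerSummand

section CyclicCoverFun

section CommRing

variable {k V W : Type*} [CommRing k] [AddCommGroup V] [Module k V] [AddCommGroup W] [Module k W]
  {d : ℕ}

/-- The function `t ^ d - f` on `k × V`, the coordinate-free counterpart of `cyclicCover`. -/
def cyclicCoverFun (d : ℕ) (f : V → k) (z : k × V) : k :=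
  z.1 ^ d - f z.2

lemma isPowerSummand_cyclicCoverFun (f : V → k) :
    IsPowerSummand d (cyclicCoverFun d f) (LinearMap.fst k k V) (1, 0) where
  apply_eq_one := rfl
  apply_add_smul z s := by
    simp only [cyclicCoverFun, LinearMap.fst_apply, Prod.fst_add, Prod.snd_add, Prod.smul_mk,
      smul_eq_mul, mul_one, smul_zero, add_zero]
    ring

lemma exists_linearEquiv_of_fst_apply_eq_zero (χ : (k × W) ≃ₗ[k] (k × V))
    (hχ : ∀ w, (χ (0, w)).1 = 0) : ∃ ψ : W ≃ₗ[k] V, ∀ w, χ (0, w) = (0, ψ w) := by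
  have hfst (z : k × W) : (χ z).1 = z.1 * (χ (1, 0)).1 := by
    have hz : z = z.1 • (1, 0) + (0, z.2) := by simp
    conv_lhs => rw [hz, map_add, map_smul, Prod.fst_add, hχ, add_zero, Prod.smul_fst, smul_eq_mul]
  have hfst_symm (v : V) : (χ.symm (0, v)).1 = 0 := by
    have hone := hfst (χ.symm (1, 0))
    have hzero := hfst (χ.symm (0, v))
    rw [χ.apply_symm_apply] at hone hzero
    exact (IsUnit.of_mul_eq_one_right _ hone.symm).mul_left_eq_zero.1 hzero.symm
  have happly (w : W) : χ (0, w) = (0, (χ (0, w)).2) := Prod.ext (hχ w) rfl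
  have hsymm_apply (v : V) : χ.symm (0, v) = (0, (χ.symm (0, v)).2) := Prod.ext (hfst_symm v) rfl
  refine ⟨LinearEquiv.ofLinearMap (LinearMap.snd k k V ∘ₗ χ.toLinearMap ∘ₗ LinearMap.inr k k W)
    (LinearMap.snd k k W ∘ₗ χ.symm.toLinearMap ∘ₗ LinearMap.inr k k V) ?_ ?_, happly⟩
  · ext v
    simp [← hsymm_apply]
  · ext w
    simp [← happly]

/-- `Fin.snocEquiv` as a linear equivalence, splitting off the last coordinate of `R^(N+1)`. -/
def snocLinearEquiv (R : Type*) [Semiring R] (N : ℕ) :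
    (R × (Fin N → R)) ≃ₗ[R] (Fin (N + 1) → R) where
  __ := Fin.snocEquiv fun _ => R
  map_add' x y := funext <| Fin.lastCases (by simp) (by simp)
  map_smul' c x := funext <| Fin.lastCases (by simp) (by simp)

lemma eval_snocLinearEquiv_cyclicCover {N : ℕ} (F : MvPolynomial (Fin (N + 1)) k)
    (z : k × (Fin (N + 1) → k)) :
    eval (snocLinearEquiv k (N + 1) z) (cyclicCover d F) =
      cyclicCoverFun d (fun x => eval x F) z := by
  simp [snocLinearEquiv, cyclicCover, cyclicCoverFun, eval_rename, Function.comp_def]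

lemma linearlyEquivalent_eval_cyclicCover {N : ℕ} (F : MvPolynomial (Fin (N + 1)) k) :
    LinearlyEquivalent (fun x => eval x (cyclicCover d F))
      (cyclicCoverFun d fun x => eval x F) :=
  ⟨snocLinearEquiv k (N + 1), 1, fun z => by
    simp only [Units.val_one, one_mul, eval_snocLinearEquiv_cyclicCover]⟩

end CommRing

section IsSepClosed

variable {k V W : Type*} [Field k] [IsSepClosed k] [AddCommGroup V] [Module k V]
  [AddCommGroup W] [Module k W] {d : ℕ}

lemma exists_units_pow_eq (hd : (d : k) ≠ 0) (c : kˣ) : ∃ e : kˣ, e ^ d = c := by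
  have : NeZero (d : k) := ⟨hd⟩
  obtain ⟨e, he⟩ := IsSepClosed.exists_pow_nat_eq (c : k) d
  have hd' : d ≠ 0 := by
    rintro rfl
    exact hd Nat.cast_zero
  have he₀ : e ≠ 0 := by
    rintro rfl
    exact c.ne_zero (by rw [← he, zero_pow hd'])
  exact ⟨Units.mk0 e he₀, Units.ext he⟩

variable (k) in
lemma infinite_of_isSepClosed : Infinite k := by
  obtain hfinite | hinfinite := finite_or_infinite k
  · have : IsAlgClosed k := IsSepClosed.isAlgClosed_of_perfectField k
    infer_instance
  · exact hinfinite

lemma linearlyEquivalent_cyclicCoverFun (hd : (d : k) ≠ 0) {f : V → k} {g : W → k}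
    (h : LinearlyEquivalent f g) :
    LinearlyEquivalent (cyclicCoverFun d f) (cyclicCoverFun d g) := by
  obtain ⟨φ, c, hφ⟩ := h
  obtain ⟨e, rfl⟩ := exists_units_pow_eq hd c
  refine ⟨(LinearEquiv.smulOfUnit e).prodCongr φ, e ^ d, fun z => ?_⟩
  change (e * z.1) ^ d - f (φ z.2) = (e ^ d : kˣ) * (z.1 ^ d - g z.2)
  rw [hφ, Units.val_pow_eq_pow_val]
  ring

lemma linearlyEquivalent_of_cyclicCoverFun (hd : ((d * (d - 1) : ℕ) : k) ≠ 0) {f : V → k}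
    {g : W → k} (h : LinearlyEquivalent (cyclicCoverFun d f) (cyclicCoverFun d g)) :
    LinearlyEquivalent f g := by
  have := infinite_of_isSepClosed k
  have hd₀ : (d : k) ≠ 0 := cast_ne_zero_of_cast_mul_pred_ne_zero hd
  obtain ⟨φ, c, hφ⟩ := h
  obtain ⟨e, rfl⟩ := exists_units_pow_eq hd₀ c
  have hf : IsPowerSummand d (cyclicCoverFun d f ∘ φ) (LinearMap.fst k k V ∘ₗ φ.toLinearMap)
      (φ.symm (1, 0)) :=
    (isPowerSummand_cyclicCoverFun f).comp_linearEquiv φ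
  have hg : IsPowerSummand d (cyclicCoverFun d f ∘ φ) (e • LinearMap.fst k k W)
      (e⁻¹ • (1, 0)) := by
    have hcomp : cyclicCoverFun d f ∘ φ = fun z => (e : k) ^ d * cyclicCoverFun d g z :=
      funext fun z => by rw [Function.comp_apply, hφ, Units.val_pow_eq_pow_val]
    exact hcomp ▸ (isPowerSummand_cyclicCoverFun g).units_smul e
  obtain ⟨σ, hσ⟩ := hf.exists_linearEquiv hd hg
  have hσ_zero (w : W) := hσ (0, w) (by simp)
  obtain ⟨ψ, hψ⟩ := exists_linearEquiv_of_fst_apply_eq_zero (σ.trans φ) fun w => (hσ_zero w).1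
  refine ⟨ψ, e ^ d, fun w => ?_⟩
  have hcover : cyclicCoverFun d f (0, ψ w) = (e ^ d : kˣ) * cyclicCoverFun d g (0, w) := by
    rw [← hψ, ← hφ]
    exact (hσ_zero w).2
  have hd' : d ≠ 0 := fun h => hd₀ (by rw [h, Nat.cast_zero])
  simpa [cyclicCoverFun, hd'] using hcover

lemma projectivelyEquivalent_cyclicCover_iff {N : ℕ}
    (hd : ((d * (d - 1) : ℕ) : k) ≠ 0) {F F' : MvPolynomial (Fin (N + 1)) k} :
    ProjectivelyEquivalent (cyclicCover d F) (cyclicCover d F') ↔ ProjectivelyEquivalent F F' := by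
  have := infinite_of_isSepClosed k
  have hF := linearlyEquivalent_eval_cyclicCover (d := d) F
  have hF' := linearlyEquivalent_eval_cyclicCover (d := d) F'
  simp only [projectivelyEquivalent_iff_linearlyEquivalent]
  exact ⟨fun h => linearlyEquivalent_of_cyclicCoverFun hd ((hF.symm.trans h).trans hF'),
    fun h => (hF.trans (linearlyEquivalent_cyclicCoverFun
      (cast_ne_zero_of_cast_mul_pred_ne_zero hd) h)).trans hF'.symm⟩

end IsSepClosed

end CyclicCoverFun

theorem cyclic_cover_moduli_map_injective_general {k : Type*} [Field k] [IsSepClosed k]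
    (N d : ℕ) (hd : ((d * (d - 1) : ℕ) : k) ≠ 0) :
    (∀ F : MvPolynomial (Fin (N + 1)) k, F.IsHomogeneous d → SmoothPoly F →
      (cyclicCover d F).IsHomogeneous d ∧ SmoothPoly (cyclicCover d F)) ∧
    ∀ F F' : MvPolynomial (Fin (N + 1)) k,
      ProjectivelyEquivalent (cyclicCover d F) (cyclicCover d F') ↔
        ProjectivelyEquivalent F F' :=
  ⟨fun _ hF hsmooth => ⟨isHomogeneous_cyclicCover hF,
    smoothPoly_cyclicCover (cast_ne_zero_of_cast_mul_pred_ne_zero hd) hsmooth⟩,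
    fun _ _ => projectivelyEquivalent_cyclicCover_iff hd⟩

/-- The map `F ↦ x_{n+2}^d − F` sends smooth degree-`d` forms in `x₀, …, x_{n+1}` to smooth
degree-`d` forms in `x₀, …, x_{n+2}`, and descends to a well-defined injective map on the
sets of orbits under the actions of `GL_{n+2}(k) × kˣ` and `GL_{n+3}(k) × kˣ`. -/
theorem cyclic_cover_moduli_map_injective
    {k : Type*} [Field k] [IsAlgClosed k] [CharZero k]
    (n d : ℕ) (hn : 2 ≤ n) (hd : 2 ≤ d) :
    (∀ F : MvPolynomial (Fin (n + 2)) k, F.IsHomogeneous d → SmoothPoly F →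
      (cyclicCover d F).IsHomogeneous d ∧ SmoothPoly (cyclicCover d F)) ∧
    ∃ Φ : Quot (orbitRel k (n + 2) d) → Quot (orbitRel k (n + 3) d),
      Function.Injective Φ ∧
      ∀ (F : SmoothForm k (n + 2) d) (G : SmoothForm k (n + 3) d),
        (G.1 : MvPolynomial (Fin (n + 3)) k) = cyclicCover d F.1 →
        Φ (Quot.mk _ F) = Quot.mk _ G := by
  obtain ⟨hsmooth, hequiv⟩ := cyclic_cover_moduli_map_injective_general (k := k) (n + 1) d
    (Nat.cast_ne_zero.2 (Nat.mul_ne_zero (by omega) (by omega)))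
  exact ⟨hsmooth, exists_injective_quot_orbitRel_map (cyclicCover d) hsmooth hequiv⟩
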